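/- arXiv:1707.08199 — 5 statements merged into one kernel-verified Lean document; each statement's English description precedes it below -/
import Mathlib

section
/- For every α > 0 and every A ∈ [0, |Ω|], Λ(α,A) = inf_η inf_u (∫_Ω (Δu)² + α ∫_Ω η u²) / ∫_Ω u², where η ranges over all measurable functions η : Ω → [0,1] with ∫_Ω η = A and u ranges over smooth compactly supported functions u : Ω → ℝ with u ≢ 0. -/
open MeasureTheory ENNReal

noncomputable section

/-- The Euclidean Laplacian `Δu` of a function `u : ℝⁿ → ℝ`. -/
def lap {n : ℕ} (u : EuclideanSpace ℝ (Fin n) → ℝ) (x : EuclideanSpace ℝ (Fin n)) : ℝ :=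
  ∑ i : Fin n, iteratedFDeriv ℝ 2 u x ![EuclideanSpace.single i 1, EuclideanSpace.single i 1]

/-- Smooth compactly supported test functions on `Ω`, not identically zero. -/
def TestFun {n : ℕ} (Ω : Set (EuclideanSpace ℝ (Fin n)))
    (u : EuclideanSpace ℝ (Fin n) → ℝ) : Prop :=
  ContDiff ℝ (⊤ : ℕ∞) u ∧ HasCompactSupport u ∧ tsupport u ⊆ Ω ∧ u ≠ 0

/-- The generalized composite plate eigenvalue
`Λ(α,A) = inf_S inf_u (∫_Ω (Δu)² + α ∫_S u²) / ∫_Ω u²`,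
the infima being over measurable `S ⊆ Ω` with `|S| = A` and over smooth compactly
supported `u : Ω → ℝ`, `u ≢ 0`. -/
def Lam {n : ℕ} (Ω : Set (EuclideanSpace ℝ (Fin n))) (α A : ℝ) : ℝ :=
  sInf { r : ℝ | ∃ S : Set (EuclideanSpace ℝ (Fin n)), MeasurableSet S ∧ S ⊆ Ω ∧
      volume S = ENNReal.ofReal A ∧
      ∃ u : EuclideanSpace ℝ (Fin n) → ℝ, TestFun Ω u ∧
        r = ((∫ x in Ω, lap u x ^ 2) + α * ∫ x in S, u x ^ 2) / ∫ x in Ω, u x ^ 2 }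

/-!
Indicators of sets are among the admissible `η`, so only `Λ(α,A) ≤ …` needs an argument. For fixed
`u` the numerator is affine in `η`, and the bathtub principle minimises `∫ η f`, here with
`f = α u²`, among all `η` of given mass by the indicator of a set squeezed between `{f < t}` and
`{f ≤ t}`. Such a set of exactly the prescribed measure exists because Lebesgue measure is nonatomic:
the level set `{f = t}` may have positive measure, but it has subsets of every smaller measure.
-/

section

open Set Filter Topology

theorem tendsto_measure_Iic_atBot {ι : Type*} [LinearOrder ι] [NoMinOrder ι] [Nonempty ι]
    [TopologicalSpace ι] [OrderClosedTopology ι] [MeasurableSpace ι] [OpensMeasurableSpace ι]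
    [(atBot : Filter ι).IsCountablyGenerated] (μ : Measure ι) [IsFiniteMeasure μ] :
    Tendsto (fun x => μ (Iic x)) atBot (𝓝 0) := by
  have h := tendsto_measure_iInter_atBot (μ := μ) (fun _ => measurableSet_Iic.nullMeasurableSet)
    monotone_Iic ⟨Classical.arbitrary ι, measure_ne_top _ _⟩
  have hempty : ⋂ x : ι, Iic x = ∅ := iInter_Iic_eq_empty_iff.2 (by simp [not_bddBelow_univ])
  rwa [hempty, measure_empty] at h

theorem exists_measure_Iio_le_le_measure_Iic {ι : Type*} [ConditionallyCompleteLinearOrder ι]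
    [DenselyOrdered ι] [NoMinOrder ι] [NoMaxOrder ι] [Nonempty ι] [TopologicalSpace ι]
    [OrderTopology ι] [SecondCountableTopology ι] [MeasurableSpace ι] [OpensMeasurableSpace ι]
    (μ : Measure ι) [IsFiniteMeasure μ] {a : ℝ≥0∞} (ha₀ : 0 < a) (ha : a < μ univ) :
    ∃ t, μ (Iio t) ≤ a ∧ a ≤ μ (Iic t) := by
  set T : Set ι := {s | a ≤ μ (Iic s)}
  have hT : T.Nonempty :=
    ((tendsto_measure_Iic_atTop μ).eventually (eventually_ge_nhds ha)).exists
  obtain ⟨b, hb⟩ : ∃ b, μ (Iic b) < a :=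
    ((tendsto_measure_Iic_atBot μ).eventually (eventually_lt_nhds ha₀)).exists
  have hTb : BddBelow T := ⟨b, fun s hs => le_of_not_gt fun hsb =>
    (hs.trans (measure_mono (Iic_subset_Iic.2 hsb.le))).not_gt hb⟩
  refine ⟨sInf T, ?_, ?_⟩
  · obtain ⟨v, hv, hvT, hvlim⟩ := exists_seq_strictMono_tendsto (sInf T)
    have hmono : Monotone fun k => Iic (v k) := monotone_Iic.comp hv.monotone
    rw [← iUnion_Iic_eq_Iio_of_lt_of_tendsto hvT hvlim, hmono.measure_iUnion]
    exact iSup_le fun k => le_of_not_ge fun h => (hvT k).not_ge (csInf_le hTb h)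
  · have hIic : ⋂ r > sInf T, Iic r = Iic (sInf T) := by
      ext x
      simpa using forall_gt_imp_ge_iff_le_of_dense
    obtain ⟨c, hc⟩ := exists_gt (sInf T)
    have hlim := tendsto_measure_biInter_gt (μ := μ) (s := Iic) (a := sInf T)
      (fun _ _ => measurableSet_Iic.nullMeasurableSet) (fun _ _ _ h => Iic_subset_Iic.2 h)
      ⟨c, hc, measure_ne_top _ _⟩
    rw [hIic] at hlim
    refine ge_of_tendsto hlim (eventually_mem_nhdsWithin.mono fun r hr => ?_)
    obtain ⟨s, hs, hsr⟩ := exists_lt_of_csInf_lt hT hr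
    exact hs.trans (measure_mono (Iic_subset_Iic.2 hsr.le))

variable {X : Type*} [MeasurableSpace X] {μ : Measure X}

theorem exists_measurableSet_subset_measure_eq [StandardBorelSpace X] [NullSingletonClass μ]
    {s : Set X} (hs : MeasurableSet s) (hμs : μ s ≠ ∞) {a : ℝ≥0∞} (ha : a ≤ μ s) :
    ∃ t ⊆ s, MeasurableSet t ∧ μ t = a := by
  rcases eq_zero_or_pos a with rfl | ha₀
  · exact ⟨∅, empty_subset s, .empty, measure_empty⟩
  rcases ha.eq_or_lt with rfl | has
  · exact ⟨s, subset_rfl, hs, rfl⟩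
  -- Transport to `ℝ`: points are null for the image measure, so at a quantile `c` the two bounds
  -- on the measures of `Iio c` and `Iic c` close up.
  have hg := measurableEmbedding_embeddingReal X
  set g := embeddingReal X
  have : IsFiniteMeasure (μ.restrict s) := ⟨by simpa using hμs.lt_top⟩
  set ν := (μ.restrict s).map g
  have : NullSingletonClass ν := ⟨fun c => by
    rw [hg.map_apply]
    exact (subsingleton_singleton.preimage hg.injective).measure_zero _⟩
  obtain ⟨c, hc_Iio, hc_Iic⟩ := exists_measure_Iio_le_le_measure_Iic ν ha₀
    (by simpa [ν, hg.map_apply] using has)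
  have hc : ν (Iic c) = a := le_antisymm ((measure_congr Iio_ae_eq_Iic).ge.trans hc_Iio) hc_Iic
  have hmeas : MeasurableSet (g ⁻¹' Iic c) := hg.measurable measurableSet_Iic
  refine ⟨g ⁻¹' Iic c ∩ s, inter_subset_right, hmeas.inter hs, ?_⟩
  rwa [hg.map_apply, Measure.restrict_apply hmeas] at hc

theorem exists_sublevel_measure_eq [StandardBorelSpace X] [IsFiniteMeasure μ]
    [NullSingletonClass μ] {f : X → ℝ} (hf : Measurable f) {a : ℝ≥0∞} (ha₀ : 0 < a)
    (ha : a < μ univ) :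
    ∃ S t, MeasurableSet S ∧ μ S = a ∧ {x | f x < t} ⊆ S ∧ S ⊆ {x | f x ≤ t} := by
  obtain ⟨t, hlt, hle⟩ := exists_measure_Iio_le_le_measure_Iic (μ.map f) ha₀
    (by rwa [Measure.map_apply hf .univ])
  rw [Measure.map_apply hf measurableSet_Iio] at hlt
  rw [Measure.map_apply hf measurableSet_Iic, ← Iio_union_right, preimage_union] at hle
  obtain ⟨G, hGt, hG, hμG⟩ := exists_measurableSet_subset_measure_eq (μ := μ)
    (hf (measurableSet_singleton t)) (measure_ne_top _ _)
    (tsub_le_iff_left.2 (hle.trans (measure_union_le _ _)))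
  refine ⟨f ⁻¹' Iio t ∪ G, t, (hf measurableSet_Iio).union hG, ?_, subset_union_left,
    union_subset (fun x (hx : f x < t) => hx.le) fun x hx => (hGt hx).le⟩
  have hdisj : Disjoint (f ⁻¹' Iio t) G :=
    disjoint_left.2 fun x hx hxG => hx.ne (hGt hxG)
  rw [measure_union hdisj hG, hμG, add_tsub_cancel_of_le hlt]

/-- `η` is a relaxed set of mass `A`: a density with values in `[0, 1]` and integral `A`, the
relaxation of the indicator function of a set of measure `A`. -/
structure IsRelaxedSet (μ : Measure X) (A : ℝ) (η : X → ℝ) : Prop where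
  measurable : Measurable η
  mem_Icc : ∀ᵐ x ∂μ, η x ∈ Icc 0 1
  integral_eq : ∫ x, η x ∂μ = A

namespace IsRelaxedSet

variable {A : ℝ} {η f : X → ℝ}

theorem indicator_one {S : Set X} (hS : MeasurableSet S) :
    IsRelaxedSet μ (μ.real S) (S.indicator 1) where
  measurable := measurable_one.indicator hS
  mem_Icc := .of_forall fun x => by by_cases hx : x ∈ S <;> simp [hx]
  integral_eq := integral_indicator_one hS

theorem restrict_indicator_one {Ω S : Set X} (hS : MeasurableSet S) (hSΩ : S ⊆ Ω) (hA₀ : 0 ≤ A)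
    (hSA : μ S = ENNReal.ofReal A) : IsRelaxedSet (μ.restrict Ω) A (S.indicator 1) := by
  have hA : (μ.restrict Ω).real S = A := by
    rw [measureReal_restrict_apply hS, inter_eq_left.2 hSΩ, measureReal_def, hSA,
      ENNReal.toReal_ofReal hA₀]
  exact hA ▸ indicator_one hS

theorem norm_le_one (hη : IsRelaxedSet μ A η) : ∀ᵐ x ∂μ, ‖η x‖ ≤ 1 := by
  filter_upwards [hη.mem_Icc] with x ⟨h₀, h₁⟩
  rwa [Real.norm_of_nonneg h₀]

theorem integrable [IsFiniteMeasure μ] (hη : IsRelaxedSet μ A η) : Integrable η μ :=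
  .of_bound hη.measurable.aestronglyMeasurable 1 hη.norm_le_one

theorem integrable_mul (hη : IsRelaxedSet μ A η) (hf : Integrable f μ) :
    Integrable (fun x => η x * f x) μ :=
  hf.bdd_mul hη.measurable.aestronglyMeasurable hη.norm_le_one

theorem abs_integral_mul_le (hη : IsRelaxedSet μ A η) (hf : Integrable f μ) :
    |∫ x, η x * f x ∂μ| ≤ ∫ x, |f x| ∂μ := by
  rw [← Real.norm_eq_abs]
  refine norm_integral_le_of_norm_le hf.abs ?_
  filter_upwards [hη.norm_le_one] with x hx
  rw [norm_mul, ← Real.norm_eq_abs]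
  exact mul_le_of_le_one_left (norm_nonneg _) hx

theorem ae_eq_zero [IsFiniteMeasure μ] (hη : IsRelaxedSet μ 0 η) : η =ᵐ[μ] 0 :=
  (integral_eq_zero_iff_of_nonneg_ae (hη.mem_Icc.mono fun _ h => h.1) hη.integrable).1
    hη.integral_eq

theorem compl [IsFiniteMeasure μ] (hη : IsRelaxedSet μ A η) :
    IsRelaxedSet μ (μ.real univ - A) (1 - η) where
  measurable := measurable_one.sub hη.measurable
  mem_Icc := hη.mem_Icc.mono fun x ⟨h₀, h₁⟩ => ⟨sub_nonneg.2 h₁, sub_le_self 1 h₀⟩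
  integral_eq := by
    simp [integral_sub (integrable_const (1 : ℝ)) hη.integrable, hη.integral_eq]

theorem ae_eq_one [IsFiniteMeasure μ] (hη : IsRelaxedSet μ (μ.real univ) η) : η =ᵐ[μ] 1 := by
  have h : IsRelaxedSet μ 0 (1 - η) := by simpa using hη.compl
  filter_upwards [h.ae_eq_zero] with x hx
  exact (sub_eq_zero.1 hx).symm

theorem setIntegral_le_integral_mul [IsFiniteMeasure μ] {S : Set X} (hS : MeasurableSet S)
    (hη : IsRelaxedSet μ (μ.real S) η) (hf : Integrable f μ) {t : ℝ}
    (hlt : {x | f x < t} ⊆ S) (hle : S ⊆ {x | f x ≤ t}) :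
    ∫ x in S, f x ∂μ ≤ ∫ x, η x * f x ∂μ := by
  have hSi : Integrable (S.indicator (1 : X → ℝ)) μ := (integrable_const 1).indicator hS
  -- Both signs of `f - t` favour the indicator of `S`, and `t * η` has the same integral for both.
  have hpointwise : ∀ᵐ x ∂μ, S.indicator f x - t * S.indicator 1 x ≤ η x * f x - t * η x := by
    filter_upwards [hη.mem_Icc] with x ⟨h₀, h₁⟩
    by_cases hx : x ∈ S
    · have : f x ≤ t := hle hx
      simp only [indicator_of_mem hx, Pi.one_apply]
      nlinarith
    · have : t ≤ f x := le_of_not_gt fun h => hx (hlt h)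
      simp only [indicator_of_notMem hx]
      nlinarith
  have hmono := integral_mono_ae ((hf.indicator hS).sub (hSi.const_mul t))
    ((hη.integrable_mul hf).sub (hη.integrable.const_mul t)) hpointwise
  rw [integral_sub' (hf.indicator hS) (hSi.const_mul t),
    integral_sub' (hη.integrable_mul hf) (hη.integrable.const_mul t), integral_const_mul,
    integral_const_mul, integral_indicator_one hS, hη.integral_eq, integral_indicator hS] at hmono
  linarith

end IsRelaxedSet

theorem exists_setIntegral_le_integral_mul [StandardBorelSpace X] [IsFiniteMeasure μ]
    [NullSingletonClass μ] {f : X → ℝ} (hfm : Measurable f) (hf : Integrable f μ) {A : ℝ}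
    (hA₀ : 0 ≤ A) (hA : A ≤ μ.real univ) :
    ∃ S, MeasurableSet S ∧ μ S = ENNReal.ofReal A ∧
      ∀ η, IsRelaxedSet μ A η → ∫ x in S, f x ∂μ ≤ ∫ x, η x * f x ∂μ := by
  -- At the two extreme masses there need not be a real threshold, since `f` may be unbounded.
  rcases hA₀.eq_or_lt with rfl | hA₀'
  · refine ⟨∅, .empty, by simp, fun η hη => ?_⟩
    have h : (fun x => η x * f x) =ᵐ[μ] 0 := by
      filter_upwards [hη.ae_eq_zero] with x hx using by simp [hx]
    simp [integral_congr_ae h]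
  rcases hA.eq_or_lt with rfl | hA'
  · refine ⟨univ, .univ, by simp, fun η hη => ?_⟩
    have h : (fun x => η x * f x) =ᵐ[μ] f := by
      filter_upwards [hη.ae_eq_one] with x hx using by simp [hx]
    rw [setIntegral_univ, integral_congr_ae h]
  obtain ⟨S, t, hS, hSA, hlt, hle⟩ := exists_sublevel_measure_eq hfm (ENNReal.ofReal_pos.2 hA₀')
    ((ENNReal.ofReal_lt_iff_lt_toReal hA₀ (measure_ne_top _ _)).2 hA')
  refine ⟨S, hS, hSA, fun η hη => ?_⟩
  rw [← ENNReal.toReal_ofReal hA₀, ← hSA] at hη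
  exact hη.setIntegral_le_integral_mul hS hf hlt hle

namespace TestFun

variable {n : ℕ} {Ω : Set (EuclideanSpace ℝ (Fin n))} {u : EuclideanSpace ℝ (Fin n) → ℝ}

theorem exists_of_nonempty_interior (hΩ : (interior Ω).Nonempty) : ∃ u, TestFun Ω u := by
  obtain ⟨x, hx⟩ := hΩ
  obtain ⟨u, hsupp, hcomp, hsmooth, -, hux⟩ :=
    exists_contDiff_tsupport_subset (n := ⊤) (mem_interior_iff_mem_nhds.1 hx)
  exact ⟨u, hsmooth, hcomp, hsupp, fun h => by simp [h] at hux⟩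

theorem continuous (hu : TestFun Ω u) : Continuous u :=
  hu.1.continuous

theorem integrable_sq (hu : TestFun Ω u) : Integrable fun x => u x ^ 2 :=
  have hcomp : HasCompactSupport fun x => u x ^ 2 := hu.2.1.comp_left (g := (· ^ 2)) (by simp)
  (hu.continuous.pow 2).integrable_of_hasCompactSupport hcomp

end TestFun

/-- The Rayleigh quotient `(∫_Ω (Δu)² + α ∫_Ω η u²) / ∫_Ω u²` of the plate with density `η`.
A set `S ⊆ Ω` is encoded by the density `S.indicator 1`. -/
def plateQuotient {n : ℕ} (Ω : Set (EuclideanSpace ℝ (Fin n))) (α : ℝ)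
    (η u : EuclideanSpace ℝ (Fin n) → ℝ) : ℝ :=
  ((∫ x in Ω, lap u x ^ 2) + α * ∫ x in Ω, η x * u x ^ 2) / ∫ x in Ω, u x ^ 2

section PlateQuotient

variable {n : ℕ} {Ω : Set (EuclideanSpace ℝ (Fin n))} {α A : ℝ}
  {η u : EuclideanSpace ℝ (Fin n) → ℝ}

theorem plateQuotient_indicator_one {S : Set (EuclideanSpace ℝ (Fin n))} (hS : MeasurableSet S)
    (hSΩ : S ⊆ Ω) : plateQuotient Ω α (S.indicator 1) u =
      ((∫ x in Ω, lap u x ^ 2) + α * ∫ x in S, u x ^ 2) / ∫ x in Ω, u x ^ 2 := by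
  have h : (fun x => S.indicator 1 x * u x ^ 2) = S.indicator fun x => u x ^ 2 := by
    ext x
    by_cases hx : x ∈ S <;> simp [hx]
  rw [plateQuotient, h, setIntegral_indicator hS, inter_eq_right.2 hSΩ]

theorem neg_abs_le_plateQuotient (hη : IsRelaxedSet (volume.restrict Ω) A η) (hu : TestFun Ω u) :
    -|α| ≤ plateQuotient Ω α η u := by
  have hD : 0 ≤ ∫ x in Ω, u x ^ 2 := integral_nonneg fun x => sq_nonneg (u x)
  have hL : 0 ≤ ∫ x in Ω, lap u x ^ 2 := integral_nonneg fun x => sq_nonneg (lap u x)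
  have hI : |∫ x in Ω, η x * u x ^ 2| ≤ ∫ x in Ω, u x ^ 2 := by
    simpa only [abs_sq] using
      hη.abs_integral_mul_le (f := fun x => u x ^ 2) hu.integrable_sq.integrableOn
  rw [plateQuotient]
  rcases hD.eq_or_lt with hD₀ | hD₀
  · simp [← hD₀]
  rw [le_div_iff₀ hD₀]
  have := neg_abs_le (α * ∫ x in Ω, η x * u x ^ 2)
  rw [abs_mul] at this
  linarith [mul_le_mul_of_nonneg_left hI (abs_nonneg α)]

theorem exists_set_plateQuotient_le [NeZero n] (hΩm : MeasurableSet Ω) (hΩ : volume Ω ≠ ∞)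
    (hA₀ : 0 ≤ A) (hA : A ≤ (volume Ω).toReal) (hη : IsRelaxedSet (volume.restrict Ω) A η)
    (hu : TestFun Ω u) :
    ∃ S, MeasurableSet S ∧ S ⊆ Ω ∧ volume S = ENNReal.ofReal A ∧
      plateQuotient Ω α (S.indicator 1) u ≤ plateQuotient Ω α η u := by
  have : IsFiniteMeasure (volume.restrict Ω) := ⟨by simpa using hΩ.lt_top⟩
  obtain ⟨S, hS, hSA, hmin⟩ := exists_setIntegral_le_integral_mul (μ := volume.restrict Ω)
    (f := fun x => α * u x ^ 2) ((hu.continuous.pow 2).const_mul α).measurable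
    (hu.integrable_sq.integrableOn.const_mul α) hA₀ (by simpa [measureReal_def] using hA)
  have hSΩ : MeasurableSet (S ∩ Ω) := hS.inter hΩm
  refine ⟨S ∩ Ω, hSΩ, inter_subset_right, by rwa [← Measure.restrict_apply hS], ?_⟩
  have hle : α * ∫ x in S ∩ Ω, u x ^ 2 ≤ α * ∫ x in Ω, η x * u x ^ 2 := by
    simpa only [Measure.restrict_restrict hS, mul_left_comm _ α, integral_const_mul] using hmin η hη
  rw [plateQuotient_indicator_one hSΩ inter_subset_right, plateQuotient]
  gcongr

end PlateQuotient

end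

/-- Stated with `IsGLB` because a real `sInf` is `0` on sets that are empty or unbounded below. -/
theorem statement1_general {n : ℕ} [NeZero n] (Ω : Set (EuclideanSpace ℝ (Fin n)))
    (hint : (interior Ω).Nonempty) (hΩm : MeasurableSet Ω) (hΩ : volume Ω ≠ ∞)
    (α A : ℝ) (hA₀ : 0 ≤ A) (hA : A ≤ (volume Ω).toReal) :
    IsGLB { r : ℝ | ∃ η : EuclideanSpace ℝ (Fin n) → ℝ, Measurable η ∧
      (∀ᵐ x ∂volume.restrict Ω, 0 ≤ η x ∧ η x ≤ 1) ∧ (∫ x in Ω, η x) = A ∧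
      ∃ u : EuclideanSpace ℝ (Fin n) → ℝ, TestFun Ω u ∧
        r = ((∫ x in Ω, lap u x ^ 2) + α * ∫ x in Ω, η x * u x ^ 2) / ∫ x in Ω, u x ^ 2 }
      (Lam Ω α A) := by
  set Q : Set ℝ := { r : ℝ | ∃ η : EuclideanSpace ℝ (Fin n) → ℝ, Measurable η ∧ _ }
  have hne : Q.Nonempty := by
    obtain ⟨u, hu⟩ := TestFun.exists_of_nonempty_interior hint
    obtain ⟨S, hSΩ, hS, hSA⟩ := exists_measurableSet_subset_measure_eq hΩm hΩ
      (ENNReal.ofReal_le_of_le_toReal hA)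
    have hη := IsRelaxedSet.restrict_indicator_one hS hSΩ hA₀ hSA
    exact ⟨_, _, hη.measurable, hη.mem_Icc, hη.integral_eq, u, hu, rfl⟩
  have hbdd : BddBelow Q := by
    refine ⟨-|α|, ?_⟩
    rintro _ ⟨η, hηm, hη, hηA, u, hu, rfl⟩
    exact neg_abs_le_plateQuotient ⟨hηm, hη, hηA⟩ hu
  suffices hLam : Lam Ω α A = sInf Q from hLam ▸ isGLB_csInf hne hbdd
  refine csInf_eq_csInf_of_forall_exists_le ?_ ?_
  · rintro _ ⟨S, hS, hSΩ, hSA, u, hu, rfl⟩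
    have hη := IsRelaxedSet.restrict_indicator_one hS hSΩ hA₀ hSA
    exact ⟨_, ⟨_, hη.measurable, hη.mem_Icc, hη.integral_eq, u, hu, rfl⟩,
      (plateQuotient_indicator_one hS hSΩ).le⟩
  · rintro _ ⟨η, hηm, hη, hηA, u, hu, rfl⟩
    obtain ⟨S, hS, hSΩ, hSA, hle⟩ :=
      exists_set_plateQuotient_le (α := α) hΩm hΩ hA₀ hA ⟨hηm, hη, hηA⟩ hu
    exact ⟨_, ⟨S, hS, hSΩ, hSA, u, hu, rfl⟩, (plateQuotient_indicator_one hS hSΩ).ge.trans hle⟩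

/-- For every `α > 0` and every `A ∈ [0,|Ω|]`, the generalized eigenvalue `Λ(α,A)` equals the
infimum of `(∫_Ω (Δu)² + α ∫_Ω η u²) / ∫_Ω u²` over measurable `η : Ω → [0,1]` with `∫_Ω η = A`
and smooth compactly supported `u ≢ 0`. -/
theorem statement1 {n : ℕ} (hn : 2 ≤ n) (Ω : Set (EuclideanSpace ℝ (Fin n)))
    (hne : Ω.Nonempty) (hΩo : IsOpen Ω) (hΩb : Bornology.IsBounded Ω)
    (α : ℝ) (hα : 0 < α) (A : ℝ) (hA0 : 0 ≤ A) (hA1 : A ≤ (volume Ω).toReal) :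
    Lam Ω α A = sInf { r : ℝ | ∃ η : EuclideanSpace ℝ (Fin n) → ℝ, Measurable η ∧
      (∀ᵐ x ∂volume.restrict Ω, 0 ≤ η x ∧ η x ≤ 1) ∧ (∫ x in Ω, η x) = A ∧
      ∃ u : EuclideanSpace ℝ (Fin n) → ℝ, TestFun Ω u ∧
        r = ((∫ x in Ω, lap u x ^ 2) + α * ∫ x in Ω, η x * u x ^ 2) / ∫ x in Ω, u x ^ 2 } := by
  have : NeZero n := ⟨by lia⟩
  have h := statement1_general Ω (hΩo.interior_eq.symm ▸ hne) hΩo.measurableSet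
    hΩb.measure_lt_top.ne α A hA0 hA1
  exact (h.csInf_eq h.nonempty).symm
end
end

section
/- Let 𝓗 ⊆ ℝⁿ be a closed half-space and let f : ℝⁿ → ℝ be measurable and non-negative. Then for every s > 0, the super-level sets of f and of its polarization f_𝓗 have the same Lebesgue measure: |{x ∈ ℝⁿ : f(x) > s}| = |{x ∈ ℝⁿ : f_𝓗(x) > s}|. -/
open MeasureTheory ENNReal RealInnerProductSpace

noncomputable section

/-- Reflection of `x` across the hyperplane `{y : ⟪y,e⟫ = c}` (the boundary of the closed
half-space `𝓗 = {y : ⟪y,e⟫ ≤ c}`, for a unit vector `e`). -/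
def reflH {n : ℕ} (e : EuclideanSpace ℝ (Fin n)) (c : ℝ) (x : EuclideanSpace ℝ (Fin n)) :
    EuclideanSpace ℝ (Fin n) :=
  x - (2 * (⟪x, e⟫ - c)) • e

/-- Polarization of `v : ℝⁿ → ℝ` relative to the closed half-space `𝓗 = {y : ⟪y,e⟫ ≤ c}`:
`v_𝓗(x) = max{v(x), v(x̄)}` for `x ∈ 𝓗` and `v_𝓗(x) = min{v(x), v(x̄)}` for `x ∉ 𝓗`. -/
def polarize {n : ℕ} (e : EuclideanSpace ℝ (Fin n)) (c : ℝ)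
    (v : EuclideanSpace ℝ (Fin n) → ℝ) (x : EuclideanSpace ℝ (Fin n)) : ℝ :=
  if ⟪x, e⟫ ≤ c then max (v x) (v (reflH e c x)) else min (v x) (v (reflH e c x))

/-!
Polarization only redistributes a super-level set `A` between paired points `x` and `x̄`: inside
`𝓗` one keeps `A ∪ Ā`, outside `A ∩ Ā`. Since `A ∩ Ā` is symmetric, its part outside `𝓗` may be
reflected into `𝓗`, and inclusion-exclusion there gives `|A ∩ 𝓗| + |Ā ∩ 𝓗| = |A ∩ 𝓗| + |A ∖ 𝓗|`,
the boundary hyperplane being a null set.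
-/

/-- Polarization of a set `A` relative to a set `H` (in the role of a half-space) and an involution
`σ` (in the role of the reflection across `∂H`): of the pair `x`, `σ x`, the point in `H` is
retained when at least one of the two lies in `A`, the point outside `H` only when both do. -/
def polarizeSet {α : Type*} (σ : α → α) (H A : Set α) : Set α :=
  H.ite (A ∪ σ ⁻¹' A) (A ∩ σ ⁻¹' A)

section PolarizeSet

variable {α : Type*} [MeasurableSpace α] {μ : Measure α} {σ : α → α} {H A : Set α}

theorem measure_sdiff_eq_measure_preimage_inter (hσ : MeasurePreserving σ μ μ)
    (hH : NullMeasurableSet H μ) (hσH : σ ⁻¹' H =ᵐ[μ] (Hᶜ : Set α))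
    (hA : NullMeasurableSet A μ) : μ (A \ H) = μ (σ ⁻¹' A ∩ H) := by
  rw [← hσ.measure_preimage (hA.diff hH), Set.preimage_sdiff, ← Set.sdiff_compl]
  exact measure_congr (ae_eq_set_sdiff ae_eq_rfl hσH)

theorem measure_polarizeSet (hσ : MeasurePreserving σ μ μ)
    (hinv : Function.Involutive σ) (hH : NullMeasurableSet H μ)
    (hσH : σ ⁻¹' H =ᵐ[μ] (Hᶜ : Set α)) (hA : NullMeasurableSet A μ) :
    μ (polarizeSet σ H A) = μ A := by
  have hσA : NullMeasurableSet (σ ⁻¹' A) μ := hA.preimage hσ.quasiMeasurePreserving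
  have hσσA : σ ⁻¹' (σ ⁻¹' A) = A := hinv.preimage A
  calc μ (polarizeSet σ H A)
      = μ ((A ∪ σ ⁻¹' A) ∩ H) + μ ((A ∩ σ ⁻¹' A) \ H) := by
        rw [← measure_inter_add_sdiff₀ _ hH, polarizeSet, Set.ite_inter_self, Set.ite_sdiff_self]
    _ = μ ((A ∪ σ ⁻¹' A) ∩ H) + μ ((A ∩ σ ⁻¹' A) ∩ H) := by
        rw [measure_sdiff_eq_measure_preimage_inter hσ hH hσH (hA.inter hσA),
          Set.preimage_inter, hσσA, Set.inter_comm (σ ⁻¹' A)]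
    _ = μ (A ∩ H) + μ (σ ⁻¹' A ∩ H) := by
        rw [Set.union_inter_distrib_right, Set.inter_inter_distrib_right,
          measure_union_add_inter₀ _ (hσA.inter hH)]
    _ = μ (A ∩ H) + μ (A \ H) := by rw [measure_sdiff_eq_measure_preimage_inter hσ hH hσH hA]
    _ = μ A := measure_inter_add_sdiff₀ A hH

end PolarizeSet

theorem ae_inner_ne {E : Type*} [NormedAddCommGroup E] [InnerProductSpace ℝ E]
    [FiniteDimensional ℝ E] [MeasurableSpace E] [BorelSpace E] (μ : Measure E)
    [μ.IsAddHaarMeasure] {e : E} (he : e ≠ 0) (c : ℝ) : ∀ᵐ x ∂μ, ⟪x, e⟫ ≠ c := by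
  have hsurj : Function.Surjective (innerₗ E e) :=
    LinearMap.surjective_of_ne_zero fun h ↦ he (inner_self_eq_zero.mp (DFunLike.congr_fun h e))
  simpa only [innerₗ_apply_apply, real_inner_comm e, Set.mem_compl_singleton_iff] using
    (ae_comp_linearMap_mem_iff (innerₗ E e) μ volume hsurj (measurableSet_singleton c).compl).mpr
      (Measure.ae_ne volume c)

section Reflection

variable {n : ℕ} {e : EuclideanSpace ℝ (Fin n)}

theorem inner_reflH (he : ‖e‖ = 1) (c : ℝ) (x : EuclideanSpace ℝ (Fin n)) :
    ⟪reflH e c x, e⟫ = 2 * c - ⟪x, e⟫ := by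
  rw [reflH, inner_sub_left, real_inner_smul_left, real_inner_self_eq_norm_sq, he]
  ring

theorem reflH_involutive (he : ‖e‖ = 1) (c : ℝ) : Function.Involutive (reflH e c) := by
  intro x
  rw [reflH, inner_reflH he, reflH]
  module

theorem reflH_eq_reflection_add (he : ‖e‖ = 1) (c : ℝ) (x : EuclideanSpace ℝ (Fin n)) :
    reflH e c x = (ℝ ∙ e)ᗮ.reflection x + (2 * c) • e := by
  rw [Submodule.reflection_orthogonal_apply, Submodule.reflection_singleton_apply, he,
    real_inner_comm, reflH]
  simp only [RCLike.ofReal_real_eq_id, id_eq, one_pow, div_one]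
  module

theorem measurePreserving_reflH (he : ‖e‖ = 1) (c : ℝ) : MeasurePreserving (reflH e c) := by
  rw [funext (reflH_eq_reflection_add he c)]
  exact (measurePreserving_add_right volume ((2 * c) • e)).comp
    (ℝ ∙ e)ᗮ.reflection.measurePreserving

theorem reflH_preimage_halfSpace_ae_eq_compl (he : ‖e‖ = 1) (c : ℝ) :
    reflH e c ⁻¹' {x | ⟪x, e⟫ ≤ c} =ᵐ[volume] ({x | ⟪x, e⟫ ≤ c}ᶜ : Set _) := by
  have he0 : e ≠ 0 := norm_ne_zero_iff.mp (he ▸ one_ne_zero)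
  refine Filter.eventuallyEq_set.mpr ?_
  filter_upwards [ae_inner_ne volume he0 c] with x hx
  simp only [Set.mem_preimage, Set.mem_compl_iff, Set.mem_ofPred_eq, inner_reflH he, not_le]
  rw [← hx.symm.le_iff_lt]
  constructor <;> intro h <;> linarith

end Reflection

theorem setOf_lt_polarize {n : ℕ} (e : EuclideanSpace ℝ (Fin n)) (c : ℝ)
    (f : EuclideanSpace ℝ (Fin n) → ℝ) (s : ℝ) :
    {x | s < polarize e c f x} =
      polarizeSet (reflH e c) {x | ⟪x, e⟫ ≤ c} {x | s < f x} := by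
  ext x
  by_cases hx : ⟪x, e⟫ ≤ c <;> simp [polarize, polarizeSet, Set.ite, hx]

theorem statement10_general {n : ℕ} (e : EuclideanSpace ℝ (Fin n)) (he : ‖e‖ = 1) (c : ℝ)
    (f : EuclideanSpace ℝ (Fin n) → ℝ) (hf : AEMeasurable f) (s : ℝ) :
    volume {x | s < f x} = volume {x | s < polarize e c f x} := by
  have hH : MeasurableSet {x : EuclideanSpace ℝ (Fin n) | ⟪x, e⟫ ≤ c} :=
    measurableSet_le (by fun_prop) measurable_const
  have hA : NullMeasurableSet {x | s < f x} := nullMeasurableSet_lt aemeasurable_const hf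
  rw [setOf_lt_polarize, measure_polarizeSet (measurePreserving_reflH he c)
    (reflH_involutive he c) hH.nullMeasurableSet (reflH_preimage_halfSpace_ae_eq_compl he c) hA]

/-- Polarization preserves the measure of super-level sets: for measurable non-negative `f`
and every `s > 0`, `|{f > s}| = |{f_𝓗 > s}|`. -/
theorem statement10 {n : ℕ} (e : EuclideanSpace ℝ (Fin n)) (he : ‖e‖ = 1) (c : ℝ)
    (f : EuclideanSpace ℝ (Fin n) → ℝ) (hf : Measurable f) (hf0 : ∀ x, 0 ≤ f x)
    (s : ℝ) (hs : 0 < s) :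
    volume {x | s < f x} = volume {x | s < polarize e c f x} := by
  exact statement10_general e he c f hf.aemeasurable s
end
end

section
/- Let 0 ≤ h < H, t ≥ 0, let u : ℝⁿ → ℝ be non-negative, and let 𝓗 ⊆ ℝⁿ be a closed half-space. Then the polarization of the product ρ_u · u equals the product of the density associated to the polarization with the polarization: [ρ_u u]_𝓗(x) = ρ_{u_𝓗}(x) · u_𝓗(x) for every x ∈ ℝⁿ. -/
open MeasureTheory ENNReal RealInnerProductSpace

noncomputable section

/-- The two-valued density associated to `v`: `ρ_v(x) = h` if `v(x) ≤ √t`, `ρ_v(x) = H`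
if `v(x) > √t`. -/
def rhoD {n : ℕ} (h H t : ℝ) (v : EuclideanSpace ℝ (Fin n) → ℝ)
    (x : EuclideanSpace ℝ (Fin n)) : ℝ :=
  if v x ≤ Real.sqrt t then h else H

/-!
Pointwise, `ρ_u u = φ ∘ u`, where `φ a = (if a ≤ √t then h else H) * a` is monotone on `[0, ∞)`,
being a product of two nonnegative monotone factors. A monotone function commutes with `max` and
`min`, hence composition with it commutes with polarization.
-/

theorem monotone_ite_le {α β : Type*} [Preorder α] [DecidableLE α] [Preorder β]
    (s : α) {h H : β} (hH : h ≤ H) : Monotone fun a ↦ if a ≤ s then h else H := by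
  intro a b hab
  dsimp only
  split_ifs with ha hb hb
  exacts [le_rfl, hH, absurd (hab.trans hb) ha, le_rfl]

theorem monotoneOn_ite_le_mul_self {R : Type*} [Mul R] [Zero R] [Preorder R]
    [PosMulMono R] [MulPosMono R] [DecidableLE R] (s : R) {h H : R} (hh : 0 ≤ h) (hH : h ≤ H) :
    MonotoneOn (fun a ↦ (if a ≤ s then h else H) * a) (Set.Ici 0) := by
  have ite_nonneg (a : R) : 0 ≤ if a ≤ s then h else H := by
    split_ifs
    exacts [hh, hh.trans hH]
  exact ((monotone_ite_le s hH).monotoneOn _).mul monotoneOn_id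
    (fun a _ ↦ ite_nonneg a) fun _ ha ↦ ha

theorem polarize_comp_of_monotoneOn {n : ℕ} (e : EuclideanSpace ℝ (Fin n)) (c : ℝ)
    {v : EuclideanSpace ℝ (Fin n) → ℝ} {φ : ℝ → ℝ} (hφ : MonotoneOn φ (Set.range v)) :
    polarize e c (φ ∘ v) = φ ∘ polarize e c v := by
  funext x
  have hx : v x ∈ Set.range v := Set.mem_range_self x
  have hx' : v (reflH e c x) ∈ Set.range v := Set.mem_range_self _
  simp only [polarize, Function.comp_apply, apply_ite φ, hφ.map_max hx hx', hφ.map_min hx hx']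

/-- The polarization of the product `ρ_u·u` equals `ρ_{u_𝓗}·u_𝓗`:
`[ρ_u u]_𝓗(x) = ρ_{u_𝓗}(x)·u_𝓗(x)` for every `x ∈ ℝⁿ`. -/
theorem statement11 {n : ℕ} (h H t : ℝ) (hh : 0 ≤ h) (hH : h < H) (ht : 0 ≤ t)
    (u : EuclideanSpace ℝ (Fin n) → ℝ) (hu : ∀ x, 0 ≤ u x)
    (e : EuclideanSpace ℝ (Fin n)) (he : ‖e‖ = 1) (c : ℝ) (x : EuclideanSpace ℝ (Fin n)) :
    polarize e c (fun y => rhoD h H t u y * u y) x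
      = rhoD h H t (polarize e c u) x * polarize e c u x := by
  have hφ : MonotoneOn (fun a ↦ (if a ≤ √t then h else H) * a) (Set.range u) :=
    (monotoneOn_ite_le_mul_self √t hh hH.le).mono (Set.range_subset_iff.2 hu)
  exact congrFun (polarize_comp_of_monotoneOn e c hφ) x
end
end

section
/- Let 0 < h < H, t ≥ 0, let u : ℝⁿ → ℝ be non-negative, and let 𝓗 ⊆ ℝⁿ be a closed half-space. If ρ_u(x) u(x) = [ρ_u u]_𝓗(x) for every x ∈ ℝⁿ, then u(x) = u_𝓗(x) for every x ∈ ℝⁿ. -/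
open MeasureTheory ENNReal RealInnerProductSpace

noncomputable section

/-!
On `ℝ` the map `a ↦ ρ(a) a` is strictly increasing: it has positive slope on either side of the
threshold `√t`, and it can only jump upwards there because `√t ≥ 0`. Polarization is built from
maxima and minima of two values, so it commutes with every monotone map; a strictly increasing map
can moreover be cancelled from `ρ_u u = [ρ_u u]_𝓗`.
-/

lemma polarize_comp {n : ℕ} (e : EuclideanSpace ℝ (Fin n)) (c : ℝ) {φ : ℝ → ℝ} (hφ : Monotone φ)
    (v : EuclideanSpace ℝ (Fin n) → ℝ) :
    polarize e c (φ ∘ v) = φ ∘ polarize e c v := by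
  ext x
  simp only [polarize, Function.comp_apply, apply_ite φ, hφ.map_max, hφ.map_min]

lemma comp_eq_polarize_comp_iff {n : ℕ} {e : EuclideanSpace ℝ (Fin n)} {c : ℝ} {φ : ℝ → ℝ}
    (hφ : StrictMono φ) {v : EuclideanSpace ℝ (Fin n) → ℝ} {x : EuclideanSpace ℝ (Fin n)} :
    φ (v x) = polarize e c (φ ∘ v) x ↔ v x = polarize e c v x := by
  rw [polarize_comp e c hφ.monotone, Function.comp_apply, hφ.injective.eq_iff]

/-- The profile `a ↦ ρ(a) a`, where the density `ρ` jumps from `h` to `H` above the threshold `s`.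
With `s = √t` it factors the product `ρ_v v` as `thresholdMul h H s ∘ v`. -/
def thresholdMul {R : Type*} [Mul R] [LinearOrder R] (h H s a : R) : R :=
  (if a ≤ s then h else H) * a

lemma thresholdMul_strictMono {R : Type*} [Mul R] [Zero R] [LinearOrder R] [PosMulStrictMono R]
    [MulPosMono R] {h H s : R} (hh : 0 < h) (hH : h ≤ H) (hs : 0 ≤ s) :
    StrictMono (thresholdMul h H s) := by
  intro a b hab
  unfold thresholdMul
  rcases le_or_gt b s with hbs | hsb
  · rw [if_pos (hab.le.trans hbs), if_pos hbs]
    exact mul_lt_mul_of_pos_left hab hh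
  rw [if_neg hsb.not_ge]
  rcases le_or_gt a s with has | hsa
  · rw [if_pos has]
    calc h * a < h * b := mul_lt_mul_of_pos_left hab hh
      _ ≤ H * b := mul_le_mul_of_nonneg_right hH (hs.trans hsb.le)
  · rw [if_neg hsa.not_ge]
    exact mul_lt_mul_of_pos_left hab (hh.trans_le hH)

lemma rhoD_mul_eq_thresholdMul_comp {n : ℕ} (h H t : ℝ) (v : EuclideanSpace ℝ (Fin n) → ℝ) :
    (fun x => rhoD h H t v x * v x) = thresholdMul h H √t ∘ v :=
  rfl

theorem statement12_general {n : ℕ} {h H t : ℝ} (hh : 0 < h) (hH : h ≤ H) (_ht : 0 ≤ t)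
    (u : EuclideanSpace ℝ (Fin n) → ℝ) {e : EuclideanSpace ℝ (Fin n)} (_he : ‖e‖ = 1) (c : ℝ)
    (x : EuclideanSpace ℝ (Fin n)) :
    rhoD h H t u x * u x = polarize e c (fun y => rhoD h H t u y * u y) x ↔
      u x = polarize e c u x := by
  rw [rhoD_mul_eq_thresholdMul_comp]
  exact comp_eq_polarize_comp_iff (thresholdMul_strictMono hh hH t.sqrt_nonneg)

/-- If `0 < h < H` and `ρ_u u = [ρ_u u]_𝓗` everywhere, then `u = u_𝓗` everywhere. -/
theorem statement12 {n : ℕ} (h H t : ℝ) (hh : 0 < h) (hH : h < H) (ht : 0 ≤ t)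
    (u : EuclideanSpace ℝ (Fin n) → ℝ) (hu : ∀ x, 0 ≤ u x)
    (e : EuclideanSpace ℝ (Fin n)) (he : ‖e‖ = 1) (c : ℝ)
    (hyp : ∀ x, rhoD h H t u x * u x = polarize e c (fun y => rhoD h H t u y * u y) x) :
    ∀ x, u x = polarize e c u x :=
  fun x => (statement12_general hh hH.le ht u he c x).1 (hyp x)
end
end

section
/- Let v : ℝⁿ → ℝ be continuous with compact support. Then v is radial and radially non-increasing (i.e. there exists a non-increasing function φ : [0,∞) → ℝ with v(x) = φ(|x|) for every x ∈ ℝⁿ) if and only if v = v_𝓗 for every closed half-space 𝓗 ⊆ ℝⁿ with 0 in the interior of 𝓗. -/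
open MeasureTheory ENNReal RealInnerProductSpace

noncomputable section

/-!
If `‖x‖ < ‖y‖`, the perpendicular bisector of `x` and `y` bounds a half-space with `0` and `x` in
its interior, and reflection across it sends `x` to `y`. Conversely, reflection across the boundary
of a half-space with `0` in its interior increases the norm of the interior points of the half-space
and decreases that of the points outside it. So invariance under all these polarizations says
exactly that `‖x‖ < ‖y‖` implies `v y ≤ v x`. Continuity extends this to `‖x‖ ≤ ‖y‖`, which makes
`v` constant on spheres.
-/

section Radial

variable {E α : Type*} [NormedAddCommGroup E] [NormedSpace ℝ E]

theorem le_of_norm_le_of_antivary_norm [Preorder α] [TopologicalSpace α] [ClosedIicTopology α]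
    {v : E → α} (hv : Continuous v) (h : Antivary v norm) {x y : E} (hxy : ‖x‖ ≤ ‖y‖) :
    v y ≤ v x := by
  rcases eq_or_ne x 0 with rfl | hx
  · rcases eq_or_ne y 0 with rfl | hy
    · exact le_rfl
    · exact h (by simpa using hy)
  · have hclosed : IsClosed {z | v z ≤ v x} := isClosed_Iic.preimage hv
    have hsub : (Metric.closedBall (0 : E) ‖x‖)ᶜ ⊆ {z | v z ≤ v x} := fun z hz ↦
      h (by simpa using hz)
    have hy : y ∈ closure (Metric.closedBall (0 : E) ‖x‖)ᶜ := by
      rw [closure_compl, interior_closedBall _ (norm_ne_zero_iff.mpr hx)]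
      simpa using hxy
    exact closure_minimal hsub hclosed hy

theorem exists_antitoneOn_norm_of_norm_le [PartialOrder α] {v : E → α}
    (h : ∀ ⦃x y⦄, ‖x‖ ≤ ‖y‖ → v y ≤ v x) :
    ∃ φ : ℝ → α, AntitoneOn φ (Set.Ici 0) ∧ ∀ x, v x = φ ‖x‖ := by
  rcases subsingleton_or_nontrivial E with _ | _
  · exact ⟨fun _ ↦ v 0, antitoneOn_const, fun x ↦ congrArg v (Subsingleton.elim x 0)⟩
  · obtain ⟨e, he⟩ := exists_norm_eq E zero_le_one
    have norm_smul_e {r : ℝ} (hr : 0 ≤ r) : ‖r • e‖ = r := by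
      rw [norm_smul, he, mul_one, Real.norm_of_nonneg hr]
    refine ⟨fun r ↦ v (r • e), fun a ha b hb hab ↦ h ?_, fun x ↦ ?_⟩
    · rwa [norm_smul_e ha, norm_smul_e hb]
    · have hx := norm_smul_e (norm_nonneg x)
      exact le_antisymm (h hx.le) (h hx.ge)

theorem exists_antitoneOn_norm_iff_antivary_norm [PartialOrder α] [TopologicalSpace α]
    [ClosedIicTopology α] {v : E → α} (hv : Continuous v) :
    (∃ φ : ℝ → α, AntitoneOn φ (Set.Ici 0) ∧ ∀ x, v x = φ ‖x‖) ↔ Antivary v norm := by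
  constructor
  · rintro ⟨φ, hφ, hvφ⟩ x y hxy
    rw [hvφ, hvφ]
    exact hφ (norm_nonneg x) (norm_nonneg y) hxy.le
  · exact fun h ↦ exists_antitoneOn_norm_of_norm_le fun _ _ ↦ le_of_norm_le_of_antivary_norm hv h

end Radial

section Polarization

variable {E α : Type*} [NormedAddCommGroup E] [InnerProductSpace ℝ E] [LinearOrder α]

/-- The reflection across the hyperplane `{y | ⟪y, e⟫ = c}` of a real inner product space, for a
unit vector `e`; on `EuclideanSpace ℝ (Fin n)` it is `reflH`. -/
def hyperplaneReflection (e : E) (c : ℝ) (x : E) : E :=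
  x - (2 * (⟪x, e⟫ - c)) • e

/-- The polarization of `v` relative to the closed half-space `{y | ⟪y, e⟫ ≤ c}` of a real inner
product space, for a unit vector `e`; on `EuclideanSpace ℝ (Fin n)` it is `polarize`. -/
def polarization (e : E) (c : ℝ) (v : E → α) (x : E) : α :=
  if ⟪x, e⟫ ≤ c then max (v x) (v (hyperplaneReflection e c x))
  else min (v x) (v (hyperplaneReflection e c x))

theorem hyperplaneReflection_eq_self {e x : E} {c : ℝ} (hx : ⟪x, e⟫ = c) :
    hyperplaneReflection e c x = x := by
  simp [hyperplaneReflection, hx]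

theorem norm_hyperplaneReflection_sq {e : E} (he : ‖e‖ = 1) (c : ℝ) (x : E) :
    ‖hyperplaneReflection e c x‖ ^ 2 = ‖x‖ ^ 2 + 4 * c * (c - ⟪x, e⟫) := by
  rw [hyperplaneReflection, norm_sub_sq_real, inner_smul_right, norm_smul, he, mul_one,
    Real.norm_eq_abs, sq_abs]
  ring

theorem norm_lt_norm_hyperplaneReflection_iff {e x : E} {c : ℝ} (he : ‖e‖ = 1) (hc : 0 < c) :
    ‖x‖ < ‖hyperplaneReflection e c x‖ ↔ ⟪x, e⟫ < c := by
  rw [← sq_lt_sq₀ (norm_nonneg _) (norm_nonneg _), norm_hyperplaneReflection_sq he,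
    lt_add_iff_pos_right, mul_pos_iff_of_pos_left (by positivity), sub_pos]

theorem norm_hyperplaneReflection_lt_norm_iff {e x : E} {c : ℝ} (he : ‖e‖ = 1) (hc : 0 < c) :
    ‖hyperplaneReflection e c x‖ < ‖x‖ ↔ c < ⟪x, e⟫ := by
  rw [← sq_lt_sq₀ (norm_nonneg _) (norm_nonneg _), norm_hyperplaneReflection_sq he,
    add_lt_iff_neg_left, ← smul_eq_mul (4 * c), smul_neg_iff_of_pos_left (by positivity), sub_neg]

theorem exists_hyperplaneReflection_eq {x y : E} (hxy : ‖x‖ < ‖y‖) :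
    ∃ (e : E) (c : ℝ), ‖e‖ = 1 ∧ 0 < c ∧ hyperplaneReflection e c x = y := by
  have hd : 0 < ‖y - x‖ := norm_sub_pos_iff.mpr (ne_of_apply_ne norm hxy.ne')
  set d := ‖y - x‖ with d_def
  have hsq : 0 < ‖y‖ ^ 2 - ‖x‖ ^ 2 := sub_pos.mpr (by gcongr)
  have hbisector : 2 * (⟪x, d⁻¹ • (y - x)⟫ - (‖y‖ ^ 2 - ‖x‖ ^ 2) / (2 * d)) = -d := by
    have hd_sq : d ^ 2 = ‖y‖ ^ 2 - 2 * ⟪x, y⟫ + ‖x‖ ^ 2 := by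
      rw [d_def, norm_sub_sq_real, real_inner_comm]
    rw [inner_smul_right, inner_sub_right, real_inner_self_eq_norm_sq]
    field_simp
    linarith
  -- `c` is the inner product of `e` with the midpoint of `x` and `y`.
  refine ⟨d⁻¹ • (y - x), (‖y‖ ^ 2 - ‖x‖ ^ 2) / (2 * d), ?_, by positivity, ?_⟩
  · rw [norm_smul, norm_inv, Real.norm_of_nonneg hd.le, inv_mul_cancel₀ hd.ne']
  · rw [hyperplaneReflection, hbisector, neg_smul, smul_inv_smul₀ hd.ne', sub_neg_eq_add,
      add_sub_cancel]

theorem polarization_eq_self_of_antivary_norm {v : E → α} (h : Antivary v norm) {e : E} {c : ℝ}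
    (he : ‖e‖ = 1) (hc : 0 < c) : polarization e c v = v := by
  funext x
  rcases lt_trichotomy ⟪x, e⟫ c with hx | hx | hx
  · rw [polarization, if_pos hx.le]
    exact max_eq_left (h ((norm_lt_norm_hyperplaneReflection_iff he hc).mpr hx))
  · rw [polarization, if_pos hx.le, hyperplaneReflection_eq_self hx, max_self]
  · rw [polarization, if_neg hx.not_ge]
    exact min_eq_left (h ((norm_hyperplaneReflection_lt_norm_iff he hc).mpr hx))

theorem antivary_norm_of_polarization_eq_self {v : E → α}
    (h : ∀ (e : E) (c : ℝ), ‖e‖ = 1 → 0 < c → polarization e c v = v) : Antivary v norm := by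
  intro x y hxy
  obtain ⟨e, c, he, hc, rfl⟩ := exists_hyperplaneReflection_eq hxy
  have hx : ⟪x, e⟫ < c := (norm_lt_norm_hyperplaneReflection_iff he hc).mp hxy
  have hmax := congrFun (h e c he hc) x
  rw [polarization, if_pos hx.le] at hmax
  exact max_eq_left_iff.mp hmax

theorem statement16_general [TopologicalSpace α] [ClosedIicTopology α] {v : E → α}
    (hv : Continuous v) :
    (∃ φ : ℝ → α, AntitoneOn φ (Set.Ici 0) ∧ ∀ x, v x = φ ‖x‖) ↔
      ∀ (e : E) (c : ℝ), ‖e‖ = 1 → 0 < c → polarization e c v = v :=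
  (exists_antitoneOn_norm_iff_antivary_norm hv).trans
    ⟨fun h _ _ ↦ polarization_eq_self_of_antivary_norm h, antivary_norm_of_polarization_eq_self⟩

end Polarization

/-- A continuous compactly supported `v : ℝⁿ → ℝ` is radial and radially non-increasing
if and only if `v = v_𝓗` for every closed half-space `𝓗` with `0` in its interior. -/
theorem statement16 {n : ℕ} (v : EuclideanSpace ℝ (Fin n) → ℝ)
    (hv : Continuous v) (hsupp : HasCompactSupport v) :
    (∃ φ : ℝ → ℝ, AntitoneOn φ (Set.Ici 0) ∧ ∀ x, v x = φ ‖x‖) ↔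
    (∀ (e : EuclideanSpace ℝ (Fin n)) (c : ℝ), ‖e‖ = 1 → 0 < c →
      polarize e c v = v) :=
  statement16_general hv
end
end
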